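/- Let u(z) := Im ψ(z,0). Then the third Wirtinger derivatives of u at 0 satisfy: ∂^3u/∂z̄_s∂z_j∂z_t(0) = ∂^3φ/∂z̄_s∂z_j∂z_t(0) if q+1 ≤ j,t,s ≤ n; ∂^3u/∂z̄_s∂z_j∂z_t(0) = [|λ_s|/(|λ_s|+|λ_t|)] ∂^3φ/∂z̄_s∂z_j∂z_t(0) if q+1 ≤ j,s ≤ n and 1 ≤ t ≤ q; ∂^3u/∂z̄_s∂z_j∂z_t(0) = [1/(|λ_j|+|λ_t|+|λ_s|)](|λ_s| − |λ_j||λ_t|/(|λ_j|+|λ_s|) − |λ_j||λ_t|/(|λ_s|+|λ_t|)) ∂^3φ/∂z̄_s∂z_j∂z_t(0) if q+1 ≤ s ≤ n and 1 ≤ j,t ≤ q; ∂^3u/∂z̄_s∂z_j∂z_t(0) = −∂^3φ/∂z̄_s∂z_j∂z_t(0) if 1 ≤ j,t,s ≤ q; ∂^3u/∂z̄_s∂z_j∂z_t(0) = −[|λ_s|/(|λ_j|+|λ_s|)] ∂^3φ/∂z̄_s∂z_j∂z_t(0) if 1 ≤ s,t ≤ q and q+1 ≤ j ≤ n; ∂^3u/∂z̄_s∂z_j∂z_t(0)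 = [1/(|λ_j|+|λ_t|+|λ_s|)](−|λ_s| + |λ_t||λ_j|/(|λ_j|+|λ_s|) + |λ_t||λ_j|/(|λ_s|+|λ_t|)) ∂^3φ/∂z̄_s∂z_j∂z_t(0) if q+1 ≤ j,t ≤ n and 1 ≤ s ≤ q; and ∂^3u/∂z_s∂z_j∂z_t(0) = 0 for all 1 ≤ s,j,t ≤ n. -/

import Mathlib

open Complex Asymptotics

attribute [local instance] Classical.propDecidable

noncomputable section

/-- `ℂⁿ` as `Fin n → ℂ`. -/
abbrev Cn (n : ℕ) := Fin n → ℂ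

/-- Wirtinger derivative `∂/∂z_j = (1/2)(∂/∂x_{2j-1} − i ∂/∂x_{2j})`. -/
def wd {n : ℕ} (j : Fin n) (f : Cn n → ℂ) : Cn n → ℂ := fun z =>
  (1 / 2 : ℂ) *
    (fderiv ℝ f z (Pi.single j 1) - Complex.I * fderiv ℝ f z (Pi.single j Complex.I))

/-- Wirtinger derivative `∂/∂z̄_j = (1/2)(∂/∂x_{2j-1} + i ∂/∂x_{2j})`. -/
def wdb {n : ℕ} (j : Fin n) (f : Cn n → ℂ) : Cn n → ℂ := fun z =>
  (1 / 2 : ℂ) *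
    (fderiv ℝ f z (Pi.single j 1) + Complex.I * fderiv ℝ f z (Pi.single j Complex.I))

/-- A real-valued function regarded as complex-valued. -/
def cplx {n : ℕ} (φ : Cn n → ℝ) : Cn n → ℂ := fun z => (φ z : ℂ)

/-- `φ` is smooth and `φ(z) = Σ_j λ_j |z_j|² + O(|z|³)` as `z → 0`. -/
def PhiOK {n : ℕ} (lam : Fin n → ℝ) (φ : Cn n → ℝ) : Prop :=
  ContDiff ℝ (⊤ : ℕ∞) φ ∧
    (fun z : Cn n => φ z - ∑ j, lam j * Complex.normSq (z j)) =O[nhds 0] fun z => ‖z‖ ^ 3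

/-- The conditions (a)–(e) on the phase function `ψ`. -/
def Admissible {n : ℕ} (lam : Fin n → ℝ) (φ : Cn n → ℝ) (ψ : Cn n → Cn n → ℂ) : Prop :=
  ContDiff ℝ (⊤ : ℕ∞) (fun p : Cn n × Cn n => ψ p.1 p.2) ∧
  -- (a)
  (∀ z, ψ z z = 0) ∧
  (∀ z w, ψ z w = - (starRingEnd ℂ) (ψ w z)) ∧
  -- (b)
  (∃ c : ℝ, 0 < c ∧ ∀ z w, c * ‖z - w‖ ^ 2 ≤ (ψ z w).im) ∧
  -- (c): on the diagonal, ∂ψ/∂z̄_j = i ∂φ/∂z̄_j, ∂ψ/∂z_j = −i ∂φ/∂z_j,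
  --      ∂ψ/∂w̄_j = −i ∂φ/∂z̄_j, ∂ψ/∂w_j = i ∂φ/∂z_j
  (∀ (z : Cn n) (j : Fin n), wdb j (fun x => ψ x z) z = Complex.I * wdb j (cplx φ) z) ∧
  (∀ (z : Cn n) (j : Fin n), wd j (fun x => ψ x z) z = - Complex.I * wd j (cplx φ) z) ∧
  (∀ (z : Cn n) (j : Fin n), wdb j (fun w => ψ z w) z = - Complex.I * wdb j (cplx φ) z) ∧
  (∀ (z : Cn n) (j : Fin n), wd j (fun w => ψ z w) z = Complex.I * wd j (cplx φ) z) ∧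
  -- (d): Σ_j (i ∂ψ/∂z̄_j + ∂φ/∂z̄_j)(−i ∂ψ/∂z_j + ∂φ/∂z_j) vanishes to infinite
  --      order on the diagonal
  (∀ (m : ℕ) (z : Cn n),
    iteratedFDeriv ℝ m
      (fun p : Cn n × Cn n =>
        ∑ j, (Complex.I * wdb j (fun x => ψ x p.2) p.1 + wdb j (cplx φ) p.1) *
             (- Complex.I * wd j (fun x => ψ x p.2) p.1 + wd j (cplx φ) p.1))
      (z, z) = 0) ∧
  -- (e)
  ((fun p : Cn n × Cn n =>
      ψ p.1 p.2 -
        (Complex.I * ∑ j, ((|lam j| * Complex.normSq (p.1 j - p.2 j) : ℝ) : ℂ)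
          + Complex.I * ∑ j, ((lam j : ℝ) : ℂ) *
              ((starRingEnd ℂ) (p.1 j) * p.2 j - (starRingEnd ℂ) (p.2 j) * p.1 j)))
    =O[nhds 0] fun p => ‖p‖ ^ 3)

open scoped ContDiff

lemma two_le_inf : (2 : WithTop ℕ∞) ≤ ∞ := by
  exact WithTop.coe_le_coe.2 (le_top : (2 : ℕ∞) ≤ ⊤)

section gen
variable {E F : Type*} [NormedAddCommGroup E] [NormedSpace ℝ E] [NormedAddCommGroup F] [NormedSpace ℝ F]

def dd (v : E × E) (f : E → ℂ) : E → ℂ := fun x => fderiv ℝ f x v.1 + I * fderiv ℝ f x v.2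

def ddT (v : E × E) : (E →L[ℝ] ℂ) →L[ℝ] ℂ :=
  ContinuousLinearMap.apply ℝ ℂ v.1 + (I : ℂ) • ContinuousLinearMap.apply ℝ ℂ v.2

lemma dd_eq (v : E × E) (f : E → ℂ) : dd v f = fun x => ddT v (fderiv ℝ f x) := by
  funext x; simp [dd, ddT]

def Sm (f : E → ℂ) : Prop := ContDiff ℝ ∞ f

lemma Sm.diff {f : E → ℂ} (h : Sm f) : Differentiable ℝ f := ContDiff.differentiable h (by simp)

lemma Sm.dd {f : E → ℂ} (h : Sm f) (v : E × E) : Sm (dd v f) := by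
  rw [dd_eq]
  exact (ddT v).contDiff.comp (ContDiff.fderiv_right (m := ∞) h (by simp))

lemma Sm.add {f g : E → ℂ} (h : Sm f) (h' : Sm g) : Sm (fun x => f x + g x) := ContDiff.add h h'
lemma Sm.mul {f g : E → ℂ} (h : Sm f) (h' : Sm g) : Sm (fun x => f x * g x) := ContDiff.mul h h'
lemma Sm.const (c : ℂ) : Sm (fun _ : E => c) := contDiff_const
lemma Sm.cmul {f : E → ℂ} (h : Sm f) (c : ℂ) : Sm (fun x => c * f x) := (Sm.const c).mul h
lemma Sm.sum {ι : Type*} (s : Finset ι) {f : ι → E → ℂ} (h : ∀ i, Sm (f i)) :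
    Sm (fun x => ∑ i ∈ s, f i x) := ContDiff.sum fun i _ => h i

lemma dd_add (v : E × E) {f g : E → ℂ} (h : Sm f) (h' : Sm g) :
    dd v (fun x => f x + g x) = fun x => dd v f x + dd v g x := by
  funext x
  simp only [dd]
  rw [fderiv_fun_add (h.diff x) (h'.diff x)]
  simp; ring

lemma dd_mul (v : E × E) {f g : E → ℂ} (h : Sm f) (h' : Sm g) :
    dd v (fun x => f x * g x) = fun x => dd v f x * g x + f x * dd v g x := by
  funext x
  simp only [dd]
  rw [fderiv_fun_mul (h.diff x) (h'.diff x)]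
  simp; ring

lemma dd_const (v : E × E) (c : ℂ) : dd v (fun _ => c) = fun _ => 0 := by
  funext x; simp [dd]

lemma dd_cmul (v : E × E) {f : E → ℂ} (h : Sm f) (c : ℂ) :
    dd v (fun x => c * f x) = fun x => c * dd v f x := by
  rw [dd_mul v (Sm.const c) h, dd_const]; simp

lemma dd_sum (v : E × E) {ι : Type*} (s : Finset ι) {f : ι → E → ℂ} (h : ∀ i, Sm (f i)) :
    dd v (fun x => ∑ i ∈ s, f i x) = fun x => ∑ i ∈ s, dd v (f i) x := by
  funext x
  simp only [dd]
  rw [fderiv_fun_sum (fun i _ => (h i).diff x)]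
  simp [Finset.sum_add_distrib, Finset.mul_sum]

lemma dd_vadd (v w : E × E) (f : E → ℂ) : dd (v + w) f = fun x => dd v f x + dd w f x := by
  funext x; simp [dd]; ring

lemma dd_dd (v w : E × E) {f : E → ℂ} (h : Sm f) (x : E) :
    dd v (dd w f) x = fderiv ℝ (fderiv ℝ f) x v.1 w.1 + I * fderiv ℝ (fderiv ℝ f) x v.1 w.2
      + I * fderiv ℝ (fderiv ℝ f) x v.2 w.1 - fderiv ℝ (fderiv ℝ f) x v.2 w.2 := by
  have hd : DifferentiableAt ℝ (fderiv ℝ f) x :=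
    (ContDiff.fderiv_right (m := ∞) h (by simp)).differentiable (by simp) x
  have : fderiv ℝ (dd w f) x = (ddT w).comp (fderiv ℝ (fderiv ℝ f) x) := by
    rw [dd_eq]
    exact ((ddT w).hasFDerivAt.comp x hd.hasFDerivAt).fderiv
  simp only [dd] at this ⊢
  rw [this]
  simp [ddT]
  linear_combination (fderiv ℝ (fderiv ℝ f) x v.2 w.2) * I_mul_I

lemma dd_comm (v w : E × E) {f : E → ℂ} (h : Sm f) : dd v (dd w f) = dd w (dd v f) := by
  funext x
  have hs : IsSymmSndFDerivAt ℝ f x :=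
    ContDiffAt.isSymmSndFDerivAt (n := ∞) (ContDiff.contDiffAt h) (by simpa using two_le_inf)
  rw [dd_dd v w h, dd_dd w v h, hs.eq v.1 w.1, hs.eq v.1 w.2, hs.eq v.2 w.1, hs.eq v.2 w.2]
  ring

lemma dd_comp (v : E × E) (L : E →L[ℝ] F) (c : F) {f : F → ℂ} (h : Sm f) :
    dd v (fun x => f (L x + c)) = fun x => dd (L v.1, L v.2) f (L x + c) := by
  funext x
  have : fderiv ℝ (fun x => f (L x + c)) x = (fderiv ℝ f (L x + c)).comp L :=
    ((h.diff (L x + c)).hasFDerivAt.comp x (L.hasFDerivAt.add_const c)).fderiv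
  simp [dd, this]

lemma dd_conj (v : E × E) {f : E → ℂ} (h : Sm f) :
    dd v (fun x => (starRingEnd ℂ) (f x)) = fun x => (starRingEnd ℂ) (dd (v.1, -v.2) f x) := by
  funext x
  have : fderiv ℝ (fun x => (starRingEnd ℂ) (f x)) x = (conjCLE : ℂ →L[ℝ] ℂ).comp (fderiv ℝ f x) :=
    ((conjCLE : ℂ →L[ℝ] ℂ).hasFDerivAt.comp x (h.diff x).hasFDerivAt).fderiv
  simp [dd, this]

lemma Sm.conj {f : E → ℂ} (h : Sm f) : Sm (fun x => (starRingEnd ℂ) (f x)) :=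
  (conjCLE : ℂ →L[ℝ] ℂ).contDiff.comp h

lemma Sm.compA (L : E →L[ℝ] F) (c : F) {f : F → ℂ} (h : Sm f) : Sm (fun x => f (L x + c)) :=
  ContDiff.comp h (L.contDiff.add contDiff_const)

lemma flat_dd (v : E × E) {f : E → ℂ} (h : Sm f) (x : E) (hf : ∀ m, iteratedFDeriv ℝ m f x = 0) :
    ∀ m, iteratedFDeriv ℝ m (dd v f) x = 0 := by
  intro m
  have hs : ContDiff ℝ ∞ (fderiv ℝ f) := ContDiff.fderiv_right (m := ∞) h (by simp)
  have h0 : iteratedFDeriv ℝ m (fderiv ℝ f) x = 0 := by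
    rw [← norm_eq_zero, norm_iteratedFDeriv_fderiv, hf, norm_zero]
  have := (ddT v).iteratedFDeriv_comp_left (hs.contDiffAt (x := x)) (i := m) (by exact_mod_cast le_top)
  rw [dd_eq]
  change iteratedFDeriv ℝ m (ddT v ∘ fderiv ℝ f) x = 0
  rw [this, h0]
  ext; simp

lemma flat_dd3 (u v w : E × E) {f : E → ℂ} (h : Sm f) (x : E)
    (hf : ∀ m, iteratedFDeriv ℝ m f x = 0) : dd u (dd v (dd w f)) x = 0 := by
  have := flat_dd u ((h.dd w).dd v) x (flat_dd v (h.dd w) x (flat_dd w h x hf)) 0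
  have h2 := congrArg (fun T => T 0) this
  simpa using h2

lemma leib3 (u v w : E × E) {f g : E → ℂ} (h : Sm f) (h' : Sm g) (x : E) (hf : f x = 0) (hg : g x = 0) :
    dd u (dd v (dd w (fun x => f x * g x))) x =
      dd u (dd v f) x * dd w g x + dd u (dd w f) x * dd v g x + dd v (dd w f) x * dd u g x
      + dd u f x * dd v (dd w g) x + dd v f x * dd u (dd w g) x + dd w f x * dd u (dd v g) x := by
  rw [dd_mul w h h', dd_add v ((h.dd w).mul h') (h.mul (h'.dd w)), dd_mul v (h.dd w) h',
    dd_mul v h (h'.dd w)]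
  have a1 := ((h.dd w).dd v).mul h'
  have a2 := (h.dd w).mul (h'.dd v)
  have a3 := (h.dd v).mul (h'.dd w)
  have a4 := h.mul ((h'.dd w).dd v)
  rw [dd_add u (a1.add a2) (a3.add a4), dd_add u a1 a2, dd_add u a3 a4,
    dd_mul u ((h.dd w).dd v) h', dd_mul u (h.dd w) (h'.dd v), dd_mul u (h.dd v) (h'.dd w),
    dd_mul u h ((h'.dd w).dd v)]
  simp only [hf, hg]
  ring

end gen


section gen2
variable {E F : Type*} [NormedAddCommGroup E] [NormedSpace ℝ E] [NormedAddCommGroup F] [NormedSpace ℝ F]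

lemma bigO3_diag {f : E → ℂ} (h : Sm f) (hO : f =O[nhds 0] fun x => ‖x‖ ^ 3) (v : E) :
    fderiv ℝ (fderiv ℝ f) 0 v v = 0 := by
  have hd : Differentiable ℝ (fderiv ℝ f) :=
    (ContDiff.fderiv_right (m := ∞) h (by simp)).differentiable (by simp)
  set g : ℝ → ℂ := fun t => f (t • v) with hg
  have hsm : ContDiff ℝ ∞ g := ContDiff.comp h (contDiff_id.smul contDiff_const)
  have hline : ∀ t : ℝ, HasDerivAt (fun t : ℝ => t • v) v t := fun t => by
    simpa using (hasDerivAt_id t).smul_const v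
  have hg1 : deriv g = fun t => fderiv ℝ f (t • v) v := by
    funext t
    exact ((h.diff (t • v)).hasFDerivAt.comp_hasDerivAt t (hline t)).deriv
  have hg2 : deriv (deriv g) 0 = fderiv ℝ (fderiv ℝ f) 0 v v := by
    rw [hg1]
    have h1 := (hd ((0:ℝ) • v)).hasFDerivAt.comp_hasDerivAt 0 (hline 0)
    have h2 := (h1.clm_apply (hasDerivAt_const 0 v)).deriv
    simpa using h2
  have hf0 : f 0 = 0 := by
    obtain ⟨c, hc⟩ := hO.bound
    simpa using hc.self_of_nhds
  have hgO : g =o[nhds 0] fun t : ℝ => t ^ 2 := by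
    have ht : Filter.Tendsto (fun t : ℝ => t • v) (nhds 0) (nhds 0) := by
      have := (hline 0).continuousAt.tendsto
      simpa using this
    have h1 := hO.comp_tendsto ht
    have h2 : g =O[nhds 0] fun t : ℝ => t ^ 3 := by
      refine h1.trans ?_
      refine IsBigO.of_bound (‖v‖ ^ 3) (Filter.Eventually.of_forall fun t => ?_)
      simp [norm_smul, mul_pow, mul_comm]
    exact h2.trans_isLittleO (isLittleO_pow_pow (by norm_num))
  have hT := taylor_isLittleO_univ (f := g) (x₀ := 0) (n := 2) (hsm.of_le two_le_inf)
  simp only [taylor_within_apply, Finset.sum_range_succ, Finset.sum_range_zero, sub_zero,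
    iteratedDerivWithin_univ, iteratedDeriv_zero, iteratedDeriv_succ] at hT
  have hg0 : g 0 = 0 := by simp [hg, hf0]
  have hP := hgO.sub hT
  have hneg : Filter.Tendsto (fun t : ℝ => -t) (nhds 0) (nhds 0) := by
    simpa using (continuous_neg (G := ℝ)).tendsto 0
  have hP2 := hP.comp_tendsto hneg
  simp only [Function.comp_def] at hP2
  have hP3 := hP.add (hP2.trans_isBigO (k := fun t : ℝ => t ^ 2) (by simpa using isBigO_refl _ _))
  have hP4 : (fun t : ℝ => (t ^ 2) • deriv (deriv g) 0) =o[nhds 0] fun t : ℝ => t ^ 2 := by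
    refine hP3.congr_left fun t => ?_
    simp [hg0, Nat.factorial]
    ring
  rw [← hg2]
  by_contra hne
  have h5 : (fun t : ℝ => t ^ 2) =O[nhds 0] (fun t : ℝ => (t ^ 2) • deriv (deriv g) 0) := by
    refine IsBigO.of_bound (‖deriv (deriv g) 0‖⁻¹) (Filter.Eventually.of_forall fun t => ?_)
    have : ‖deriv (deriv g) 0‖ ≠ 0 := norm_ne_zero_iff.2 hne
    rw [norm_smul]; field_simp; rfl
  have h6 := h5.trans_isLittleO hP4
  have h7 : ∃ᶠ t : ℝ in nhds 0, ‖t ^ 2‖ ≠ 0 := by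
    have : ∃ᶠ t : ℝ in nhds 0, t ≠ 0 := by
      have := (inferInstance : Filter.NeBot (nhdsWithin (0:ℝ) {0}ᶜ))
      exact mem_closure_iff_frequently.1 (mem_closure_iff_nhdsWithin_neBot.2 this)
    refine this.mono fun t ht => by simpa using ht
  exact isLittleO_irrefl (h7.mono fun t ht => by simpa using ht) h6

lemma bigO3 {f : E → ℂ} (h : Sm f) (hO : f =O[nhds 0] fun x => ‖x‖ ^ 3) (v w : E × E) :
    dd v (dd w f) 0 = 0 := by
  have hs : IsSymmSndFDerivAt ℝ f 0 :=
    ContDiffAt.isSymmSndFDerivAt (n := ∞) (ContDiff.contDiffAt h) (by simpa using two_le_inf)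
  have key : ∀ a b : E, fderiv ℝ (fderiv ℝ f) 0 a b = 0 := by
    intro a b
    have h1 := bigO3_diag h hO (a + b)
    have h2 := bigO3_diag h hO a
    have h3 := bigO3_diag h hO b
    have h4 := hs.eq a b
    simp only [map_add, add_apply] at h1
    linear_combination (h1 - h2 - h3 + h4) / 2
  rw [dd_dd v w h]
  simp [key]

end gen2

def vv {n : ℕ} (b : Bool) (j : Fin n) : Cn n × Cn n :=
  (Pi.single j (1/2), Pi.single j (if b then I/2 else -I/2))

lemma single_half {n : ℕ} (j : Fin n) : (Pi.single j (1/2) : Cn n) = (1/2:ℝ) • Pi.single j 1 := by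
  rw [← Pi.single_smul]; congr 1; simp
lemma single_I {n : ℕ} (j : Fin n) : (Pi.single j (I/2) : Cn n) = (1/2:ℝ) • Pi.single j I := by
  rw [← Pi.single_smul]; congr 1; simp; ring
lemma single_negI {n : ℕ} (j : Fin n) : (Pi.single j (-I/2) : Cn n) = (-1/2:ℝ) • Pi.single j I := by
  rw [← Pi.single_smul]; congr 1; simp; ring

lemma wd_eq {n : ℕ} (j : Fin n) (f : Cn n → ℂ) : wd j f = dd (vv false j) f := by
  funext z
  simp only [wd, dd, vv, single_half, single_negI, map_smul, Bool.false_eq_true, if_false,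
    Complex.real_smul]
  push_cast; ring

lemma wdb_eq {n : ℕ} (j : Fin n) (f : Cn n → ℂ) : wdb j f = dd (vv true j) f := by
  funext z
  simp only [wdb, dd, vv, single_half, single_I, map_smul, if_true, Complex.real_smul]
  push_cast; ring

lemma vv_conj {n : ℕ} (b : Bool) (j : Fin n) : ((vv b j).1, -(vv b j).2) = vv (!b) j := by
  cases b <;> simp [vv, ← Pi.single_neg, neg_div]

lemma dd_vv_conj {n : ℕ} (b : Bool) (j : Fin n) {f : Cn n → ℂ} (h : Sm f) :
    dd (vv b j) (fun x => (starRingEnd ℂ) (f x)) = fun x => (starRingEnd ℂ) (dd (vv (!b) j) f x) := by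
  rw [dd_conj _ h, vv_conj]

lemma sm_coord {n : ℕ} (k : Fin n) : Sm (fun z : Cn n => z k) :=
  (ContinuousLinearMap.proj (R := ℝ) (φ := fun _ : Fin n => ℂ) k).contDiff

lemma dd_coord {n : ℕ} (b : Bool) (s k : Fin n) :
    dd (vv b s) (fun z : Cn n => z k) = fun _ => if s = k ∧ b = false then 1 else 0 := by
  funext x
  have : fderiv ℝ (fun z : Cn n => z k) x
    = ContinuousLinearMap.proj (R := ℝ) (φ := fun _ : Fin n => ℂ) k :=
    (ContinuousLinearMap.proj (R := ℝ) (φ := fun _ : Fin n => ℂ) k).hasFDerivAt.fderiv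
  simp only [dd, this, vv, ContinuousLinearMap.proj_apply]
  by_cases hk : s = k
  · subst hk
    cases b <;> simp <;> ring_nf <;> simp <;> norm_num
  · have : k ≠ s := fun h => hk h.symm
    simp [this, hk]

lemma dd_coordc {n : ℕ} (b : Bool) (s k : Fin n) :
    dd (vv b s) (fun z : Cn n => (starRingEnd ℂ) (z k)) =
      fun _ => if s = k ∧ b = true then 1 else 0 := by
  rw [dd_vv_conj _ _ (sm_coord k), dd_coord]
  funext x
  cases b <;> by_cases hk : s = k <;> simp [hk]

lemma quad {n : ℕ} (c : Fin n → ℂ) {h : Cn n → ℂ} (hs : Sm h)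
    (hO : (fun z => h z - ∑ k, c k * (z k * (starRingEnd ℂ) (z k))) =O[nhds 0] fun z => ‖z‖ ^ 3)
    (b b' : Bool) (s j : Fin n) :
    dd (vv b s) (dd (vv b' j) h) 0 = if s = j ∧ b ≠ b' then c j else 0 := by
  have hc : ∀ k, Sm (fun z : Cn n => z k * (starRingEnd ℂ) (z k)) :=
    fun k => (sm_coord k).mul (sm_coord k).conj
  have hcc : ∀ k, Sm (fun z : Cn n => c k * (z k * (starRingEnd ℂ) (z k))) := fun k => (hc k).cmul _
  have hQ : Sm (fun z : Cn n => ∑ k, c k * (z k * (starRingEnd ℂ) (z k))) := Sm.sum _ hcc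
  have hr : Sm (fun z => h z + (-1) * ∑ k, c k * (z k * (starRingEnd ℂ) (z k))) := hs.add (hQ.cmul _)
  have h0 := bigO3 hr (by simpa [sub_eq_add_neg] using hO) (vv b s) (vv b' j)
  rw [dd_add _ hs (hQ.cmul _), dd_cmul _ hQ, dd_add _ (hs.dd _) ((hQ.dd _).cmul _),
    dd_cmul _ (hQ.dd _)] at h0
  have h1 : dd (vv b s) (dd (vv b' j) (fun z : Cn n => ∑ k, c k * (z k * (starRingEnd ℂ) (z k)))) 0
      = if s = j ∧ b ≠ b' then c j else 0 := by
    rw [dd_sum _ _ hcc, dd_sum _ _ (fun k => (hcc k).dd _)]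
    have : ∀ k, dd (vv b s) (dd (vv b' j) (fun z : Cn n => c k * (z k * (starRingEnd ℂ) (z k)))) 0
        = if k = j then (if s = j ∧ b ≠ b' then c j else 0) else 0 := by
      intro k
      rw [dd_cmul _ (hc k), dd_cmul _ ((hc k).dd _), dd_mul _ (sm_coord k) (sm_coord k).conj,
        dd_coord, dd_coordc, dd_add _ ((Sm.const _).mul (sm_coord k).conj) ((sm_coord k).mul (Sm.const _)),
        dd_cmul _ (sm_coord k).conj, dd_mul _ (sm_coord k) (Sm.const _), dd_coord, dd_coordc, dd_const]
      by_cases hk : k = j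
      · subst hk
        cases b <;> cases b' <;> by_cases hs : s = k <;> simp [hs]
      · have : j ≠ k := fun h => hk h.symm
        simp [hk, this]
    simp only [this]
    simp
  linear_combination h0 + h1


section main
variable {n : ℕ}

def i1 (v : Cn n × Cn n) : (Cn n × Cn n) × (Cn n × Cn n) := ((v.1, 0), (v.2, 0))
def i2 (v : Cn n × Cn n) : (Cn n × Cn n) × (Cn n × Cn n) := ((0, v.1), (0, v.2))
def iD (v : Cn n × Cn n) : (Cn n × Cn n) × (Cn n × Cn n) := ((v.1, v.1), (v.2, v.2))

lemma iD_eq (v : Cn n × Cn n) : iD v = i1 v + i2 v := by simp [iD, i1, i2]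

lemma dd_s1 (v : Cn n × Cn n) {f : Cn n × Cn n → ℂ} (h : Sm f) (w : Cn n) :
    dd v (fun x => f (x, w)) = fun x => dd (i1 v) f (x, w) := by
  have := dd_comp v (ContinuousLinearMap.inl ℝ (Cn n) (Cn n)) (0, w) h
  simpa [i1] using this

lemma dd_s2 (v : Cn n × Cn n) {f : Cn n × Cn n → ℂ} (h : Sm f) (z : Cn n) :
    dd v (fun x => f (z, x)) = fun x => dd (i2 v) f (z, x) := by
  have := dd_comp v (ContinuousLinearMap.inr ℝ (Cn n) (Cn n)) (z, 0) h
  simpa [i2] using this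

lemma dd_sD (v : Cn n × Cn n) {f : Cn n × Cn n → ℂ} (h : Sm f) :
    dd v (fun x => f (x, x)) = fun x => dd (iD v) f (x, x) := by
  have := dd_comp v ((ContinuousLinearMap.id ℝ (Cn n)).prod (ContinuousLinearMap.id ℝ (Cn n))) 0 h
  simpa [iD] using this

lemma dd_f1 (v : Cn n × Cn n) {f : Cn n → ℂ} (h : Sm f) :
    dd (i1 v) (fun p : Cn n × Cn n => f p.1) = fun p => dd v f p.1 := by
  have := dd_comp (i1 v) (ContinuousLinearMap.fst ℝ (Cn n) (Cn n)) 0 h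
  simpa [i1] using this

lemma dd_fD (v : Cn n × Cn n) {f : Cn n → ℂ} (h : Sm f) :
    dd (iD v) (fun p : Cn n × Cn n => f p.1) = fun p => dd v f p.1 := by
  have := dd_comp (iD v) (ContinuousLinearMap.fst ℝ (Cn n) (Cn n)) 0 h
  simpa [iD] using this

lemma Sm.f1 {f : Cn n → ℂ} (h : Sm f) : Sm (fun p : Cn n × Cn n => f p.1) :=
  ContDiff.comp h contDiff_fst
lemma Sm.s1 {f : Cn n × Cn n → ℂ} (h : Sm f) (w : Cn n) : Sm (fun x => f (x, w)) :=
  ContDiff.comp h (contDiff_id.prodMk contDiff_const)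
lemma Sm.s2 {f : Cn n × Cn n → ℂ} (h : Sm f) (w : Cn n) : Sm (fun x => f (w, x)) :=
  ContDiff.comp h (contDiff_const.prodMk contDiff_id)

def sg (b : Bool) : ℂ := if b then 1 else -1

def cc (Φ : Cn n → ℂ) (Ψ : Cn n × Cn n → ℂ) (b : Bool) : Cn n × Cn n → ℂ :=
  fun p => Φ p.1 + (sg b * I) * Ψ p

/-- Abstract data extracted from the hypotheses. -/
structure Dat (lam : Fin n → ℝ) (Φ : Cn n → ℂ) (Ψ : Cn n × Cn n → ℂ) : Prop where
  sΦ : Sm Φ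
  sΨ : Sm Ψ
  diag : ∀ z, Ψ (z, z) = 0
  skew : ∀ z w, Ψ (z, w) = - (starRingEnd ℂ) (Ψ (w, z))
  real : ∀ z, (starRingEnd ℂ) (Φ z) = Φ z
  d1 : ∀ z b j, dd (i1 (vv b j)) Ψ (z, z) = sg b * I * dd (vv b j) Φ z
  eik : ∀ m, iteratedFDeriv ℝ m (fun p => ∑ j, dd (i1 (vv true j)) (cc Φ Ψ true) p *
    dd (i1 (vv false j)) (cc Φ Ψ false) p) (0, 0) = 0
  q : ∀ b b' s j, dd (i1 (vv b' s)) (dd (i1 (vv b j)) (cc Φ Ψ b)) (0, 0) =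
    if s = j ∧ b' ≠ b then (lam j : ℂ) - sg b * (|lam j| : ℝ) else 0

lemma cc_sm {Φ : Cn n → ℂ} {Ψ : Cn n × Cn n → ℂ} (h : Sm Φ) (h' : Sm Ψ) (b : Bool) :
    Sm (cc Φ Ψ b) := h.f1.add (h'.cmul _)

lemma sg_sq (b : Bool) : sg b * sg b = 1 := by cases b <;> simp [sg]

lemma dd_cc {Φ : Cn n → ℂ} {Ψ : Cn n × Cn n → ℂ} (h : Sm Φ) (h' : Sm Ψ) (b : Bool)
    (v : Cn n × Cn n) : dd (i1 v) (cc Φ Ψ b) = cc (dd v Φ) (dd (i1 v) Ψ) b := by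
  unfold cc
  rw [dd_add _ h.f1 (h'.cmul _), dd_cmul _ h', dd_f1 _ h]

lemma dd_ccD {Φ : Cn n → ℂ} {Ψ : Cn n × Cn n → ℂ} (h : Sm Φ) (h' : Sm Ψ) (b : Bool)
    (v : Cn n × Cn n) : dd (iD v) (cc Φ Ψ b) = cc (dd v Φ) (dd (iD v) Ψ) b := by
  unfold cc
  rw [dd_add _ h.f1 (h'.cmul _), dd_cmul _ h', dd_fD _ h]

lemma mkDat (lam : Fin n → ℝ) (φ : Cn n → ℝ) (hφ : PhiOK lam φ)
    (ψ : Cn n → Cn n → ℂ) (hψ : Admissible lam φ ψ) :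
    Dat lam (cplx φ) (fun p => ψ p.1 p.2) := by
  obtain ⟨hφs, hφO⟩ := hφ
  obtain ⟨hs, hdiag, hskew, -, hc1, hc2, -, -, hd, he⟩ := hψ
  have sΦ : Sm (cplx φ) := Complex.ofRealCLM.contDiff.comp hφs
  have sΨ : Sm (fun p : Cn n × Cn n => ψ p.1 p.2) := hs
  refine ⟨sΦ, sΨ, hdiag, hskew, fun z => by simp [cplx], ?_, ?_, ?_⟩
  · intro z b j
    have h1 := congrFun (dd_s1 (vv b j) sΨ z) z
    rw [← h1]
    cases b
    · have := hc2 z j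
      rw [wd_eq, wd_eq] at this
      simpa [sg] using this
    · have := hc1 z j
      rw [wdb_eq, wdb_eq] at this
      simpa [sg] using this
  · intro m
    have := hd m 0
    convert this using 2
    funext p
    refine Finset.sum_congr rfl fun j _ => ?_
    rw [dd_cc sΦ sΨ, dd_cc sΦ sΨ]
    have e1 := congrFun (dd_s1 (vv true j) sΨ p.2) p.1
    have e2 := congrFun (dd_s1 (vv false j) sΨ p.2) p.1
    simp only [wd_eq, wdb_eq, cc]
    simp only at e1 e2
    rw [e1, e2]
    simp [sg]; ring
  · intro b b' s j
    have sc := cc_sm sΦ sΨ b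
    have h1 := congrFun (dd_s1 (vv b' s) (sc.dd (i1 (vv b j))) 0) 0
    rw [← h1, ← dd_s1 (vv b j) sc 0]
    refine quad (fun k => (lam k : ℂ) - sg b * (|lam k| : ℝ)) (sc.s1 0) ?_ b' b s j
    have ht : Filter.Tendsto (fun z : Cn n => (z, (0 : Cn n))) (nhds 0) (nhds 0) := by
      have : Continuous (fun z : Cn n => (z, (0 : Cn n))) := by fun_prop
      exact this.tendsto 0
    have he' := he.comp_tendsto ht
    have he2 : (fun z : Cn n => ψ z 0 - I * ∑ k, ((|lam k| : ℝ) : ℂ) * (z k * (starRingEnd ℂ) (z k)))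
        =O[nhds 0] fun z : Cn n => ‖z‖ ^ 3 := by
      refine (he'.congr_left fun z => ?_).trans (IsBigO.of_bound 1 (Filter.Eventually.of_forall fun z => ?_))
      · simp [Complex.mul_conj]
      · simp [Prod.norm_def]
    have hφ2 : (fun z : Cn n => cplx φ z - ∑ k, (lam k : ℂ) * (z k * (starRingEnd ℂ) (z k)))
        =O[nhds 0] fun z : Cn n => ‖z‖ ^ 3 := by
      refine IsBigO.of_norm_left (hφO.norm_left.congr_left fun z => ?_)
      rw [← Complex.norm_real]
      simp [cplx, Complex.mul_conj]
    refine (hφ2.add (he2.const_mul_left (sg b * I))).congr_left fun z => ?_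
    have : ∑ k, ((lam k : ℂ) - sg b * (|lam k| : ℝ)) * (z k * (starRingEnd ℂ) (z k))
      = ∑ k, (lam k : ℂ) * (z k * (starRingEnd ℂ) (z k))
        - sg b * ∑ k, ((|lam k| : ℝ) : ℂ) * (z k * (starRingEnd ℂ) (z k)) := by
      rw [Finset.mul_sum, ← Finset.sum_sub_distrib]
      exact Finset.sum_congr rfl fun k _ => by ring
    simp only [cc]
    rw [this]
    linear_combination (-sg b * ∑ k, ((|lam k| : ℝ) : ℂ) * (z k * (starRingEnd ℂ) (z k))) * I_mul_I

variable {lam : Fin n → ℝ} {Φ : Cn n → ℂ} {Ψ : Cn n × Cn n → ℂ}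

def kap (lam : Fin n → ℝ) (b : Bool) (s : Fin n) : ℂ := (lam s : ℂ) + sg b * (|lam s| : ℝ)

lemma Dat.zero (D : Dat lam Φ Ψ) (b : Bool) (j : Fin n) (z : Cn n) :
    dd (i1 (vv b j)) (cc Φ Ψ b) (z, z) = 0 := by
  rw [dd_cc D.sΦ D.sΨ]
  simp only [cc]
  rw [D.d1]
  linear_combination (dd (vv b j) Φ z) * (I * I * sg_sq b + I_mul_I)

lemma Dat.zeroD (D : Dat lam Φ Ψ) (b : Bool) (j : Fin n) (v : Cn n × Cn n) :
    dd (iD v) (dd (i1 (vv b j)) (cc Φ Ψ b)) (0, 0) = 0 := by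
  have sc := cc_sm D.sΦ D.sΨ b
  have h1 := congrFun (dd_sD v (sc.dd (i1 (vv b j)))) 0
  rw [← h1]
  simp only [D.zero, dd_const]

/-- collapse of one direction -/
lemma Dat.coll (D : Dat lam Φ Ψ) (b : Bool) (s : Fin n) (v w : (Cn n × Cn n) × (Cn n × Cn n)) :
    ∑ j, (dd (i1 (vv b s)) (dd (i1 (vv true j)) (cc Φ Ψ true)) (0, 0) *
        dd v (dd w (dd (i1 (vv false j)) (cc Φ Ψ false))) (0, 0) +
      dd v (dd w (dd (i1 (vv true j)) (cc Φ Ψ true))) (0, 0) *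
        dd (i1 (vv b s)) (dd (i1 (vv false j)) (cc Φ Ψ false)) (0, 0)) =
    kap lam b s * dd v (dd w (dd (i1 (vv b s)) (cc Φ Ψ b))) (0, 0) := by
  simp only [D.q]
  cases b
  · simp [kap, sg, sub_eq_add_neg]
  · simp [kap, sg, mul_comm]

lemma Dat.eik3 (D : Dat lam Φ Ψ) (u v w : (Cn n × Cn n) × (Cn n × Cn n)) :
    ∑ j, (dd u (dd (i1 (vv true j)) (cc Φ Ψ true)) (0, 0) *
        dd v (dd w (dd (i1 (vv false j)) (cc Φ Ψ false))) (0, 0) +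
      dd v (dd w (dd (i1 (vv true j)) (cc Φ Ψ true))) (0, 0) *
        dd u (dd (i1 (vv false j)) (cc Φ Ψ false)) (0, 0)) +
    ∑ j, (dd v (dd (i1 (vv true j)) (cc Φ Ψ true)) (0, 0) *
        dd u (dd w (dd (i1 (vv false j)) (cc Φ Ψ false))) (0, 0) +
      dd u (dd w (dd (i1 (vv true j)) (cc Φ Ψ true))) (0, 0) *
        dd v (dd (i1 (vv false j)) (cc Φ Ψ false)) (0, 0)) +
    ∑ j, (dd w (dd (i1 (vv true j)) (cc Φ Ψ true)) (0, 0) *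
        dd u (dd v (dd (i1 (vv false j)) (cc Φ Ψ false))) (0, 0) +
      dd u (dd v (dd (i1 (vv true j)) (cc Φ Ψ true))) (0, 0) *
        dd w (dd (i1 (vv false j)) (cc Φ Ψ false)) (0, 0)) = 0 := by
  have sa := fun j => (cc_sm D.sΦ D.sΨ true).dd (i1 (vv true j))
  have sb := fun j => (cc_sm D.sΦ D.sΨ false).dd (i1 (vv false j))
  have sp := fun j => (sa j).mul (sb j)
  have h := flat_dd3 u v w (Sm.sum Finset.univ sp) (0, 0) D.eik
  rw [dd_sum _ _ sp, dd_sum _ _ (fun j => (sp j).dd _), dd_sum _ _ (fun j => ((sp j).dd _).dd _)] at h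
  rw [← h, ← Finset.sum_add_distrib, ← Finset.sum_add_distrib]
  refine Finset.sum_congr rfl fun j _ => ?_
  rw [leib3 u v w (sa j) (sb j) (0, 0) (D.zero _ _ _) (D.zero _ _ _)]
  ring



def M (Ψ : Cn n × Cn n → ℂ) (a b c : (Cn n × Cn n) × (Cn n × Cn n)) : ℂ :=
  dd a (dd b (dd c Ψ)) (0, 0)

def T3 (x y z : Bool × Fin n) (f : Cn n → ℂ) : ℂ :=
  dd (vv x.1 x.2) (dd (vv y.1 y.2) (dd (vv z.1 z.2) f)) 0

def bar (x : Bool × Fin n) : Bool × Fin n := (!x.1, x.2)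

def ve (x : Bool × Fin n) : Cn n × Cn n := vv x.1 x.2

lemma M_add1 {Ψ : Cn n × Cn n → ℂ} (a a' b c : (Cn n × Cn n) × (Cn n × Cn n)) :
    M Ψ (a + a') b c = M Ψ a b c + M Ψ a' b c := by
  simp only [M, dd_vadd]

lemma M_sw12 {Ψ : Cn n × Cn n → ℂ} (h : Sm Ψ) (a b c : (Cn n × Cn n) × (Cn n × Cn n)) :
    M Ψ a b c = M Ψ b a c := by
  simp only [M]; rw [dd_comm a b (h.dd c)]

lemma M_sw23 {Ψ : Cn n × Cn n → ℂ} (h : Sm Ψ) (a b c : (Cn n × Cn n) × (Cn n × Cn n)) :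
    M Ψ a b c = M Ψ a c b := by
  simp only [M]; rw [dd_comm b c h]

lemma M_add2 {Ψ : Cn n × Cn n → ℂ} (h : Sm Ψ) (a b b' c : (Cn n × Cn n) × (Cn n × Cn n)) :
    M Ψ a (b + b') c = M Ψ a b c + M Ψ a b' c := by
  rw [M_sw12 h, M_add1, M_sw12 h a b, M_sw12 h a b']

lemma M_add3 {Ψ : Cn n × Cn n → ℂ} (h : Sm Ψ) (a b c c' : (Cn n × Cn n) × (Cn n × Cn n)) :
    M Ψ a b (c + c') = M Ψ a b c + M Ψ a b c' := by
  rw [M_sw23 h, M_add2 h, M_sw23 h a b c, M_sw23 h a b c']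

lemma T3_sw12 {f : Cn n → ℂ} (h : Sm f) (x y z : Bool × Fin n) : T3 x y z f = T3 y x z f := by
  simp only [T3]; rw [dd_comm _ _ (h.dd _)]
lemma T3_sw23 {f : Cn n → ℂ} (h : Sm f) (x y z : Bool × Fin n) : T3 x y z f = T3 x z y f := by
  simp only [T3]; rw [dd_comm _ _ h]

lemma T3_conj {f : Cn n → ℂ} (h : Sm f) (x y z : Bool × Fin n) :
    T3 x y z (fun p => (starRingEnd ℂ) (f p)) = (starRingEnd ℂ) (T3 (bar x) (bar y) (bar z) f) := by
  simp only [T3, bar]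
  rw [dd_vv_conj _ _ h, dd_vv_conj _ _ (h.dd _), dd_vv_conj _ _ ((h.dd _).dd _)]

lemma T3_s1 (h : Sm Ψ) (x y z : Bool × Fin n) :
    T3 x y z (fun p => Ψ (p, 0)) = M Ψ (i1 (ve x)) (i1 (ve y)) (i1 (ve z)) := by
  simp only [T3, M, ve]
  rw [dd_s1 _ h, dd_s1 _ (h.dd _), dd_s1 _ ((h.dd _).dd _)]

lemma T3_s2 (h : Sm Ψ) (x y z : Bool × Fin n) :
    T3 x y z (fun p => Ψ (0, p)) = M Ψ (i2 (ve x)) (i2 (ve y)) (i2 (ve z)) := by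
  simp only [T3, M, ve]
  rw [dd_s2 _ h, dd_s2 _ (h.dd _), dd_s2 _ ((h.dd _).dd _)]

lemma M_DDD (h : Sm Ψ) (hd : ∀ z, Ψ (z, z) = 0) (x y z : Cn n × Cn n) :
    M Ψ (iD x) (iD y) (iD z) = 0 := by
  have h1 := dd_sD z h
  have h2 := dd_sD y (h.dd (iD z))
  have h3 := congrFun (dd_sD x ((h.dd (iD z)).dd (iD y))) 0
  simp only [M]
  rw [← h3, ← h2, ← h1]
  simp [hd, dd_const]

lemma Dat.DD1 (D : Dat lam Φ Ψ) (x y z : Bool × Fin n) :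
    M Ψ (iD (ve x)) (iD (ve y)) (i1 (ve z)) = sg z.1 * I * T3 x y z Φ := by
  have h := D.sΨ.dd (i1 (ve z))
  have h2 := dd_sD (ve y) h
  have h3 := congrFun (dd_sD (ve x) (h.dd (iD (ve y)))) 0
  have hz := D.sΦ.dd (vv z.1 z.2)
  simp only [M]
  rw [← h3, ← h2]
  simp only [ve, D.d1]
  rw [dd_cmul _ hz, dd_cmul _ (hz.dd _)]
  rfl

lemma cc3 (D : Dat lam Φ Ψ) (b : Bool) (x y z : Bool × Fin n) :
    dd (i1 (ve x)) (dd (i1 (ve y)) (dd (i1 (ve z)) (cc Φ Ψ b))) (0, 0) =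
      T3 x y z Φ + sg b * I * M Ψ (i1 (ve x)) (i1 (ve y)) (i1 (ve z)) := by
  rw [dd_cc D.sΦ D.sΨ, dd_cc (D.sΦ.dd _) (D.sΨ.dd _), dd_cc ((D.sΦ.dd _).dd _) ((D.sΨ.dd _).dd _)]
  rfl

lemma cc3D (D : Dat lam Φ Ψ) (b : Bool) (x y z : Bool × Fin n) :
    dd (i1 (ve x)) (dd (iD (ve y)) (dd (i1 (ve z)) (cc Φ Ψ b))) (0, 0) =
      T3 x y z Φ + sg b * I * M Ψ (i1 (ve x)) (iD (ve y)) (i1 (ve z)) := by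
  rw [dd_cc D.sΦ D.sΨ, dd_ccD (D.sΦ.dd _) (D.sΨ.dd _), dd_cc ((D.sΦ.dd _).dd _) ((D.sΨ.dd _).dd _)]
  rfl

def kp (lam : Fin n → ℝ) (x : Bool × Fin n) : ℂ := kap lam x.1 x.2

lemma Dat.eqF (D : Dat lam Φ Ψ) (x y z : Bool × Fin n) :
    (kp lam x + kp lam y + kp lam z) * T3 x y z Φ +
    (sg x.1 * kp lam x + sg y.1 * kp lam y + sg z.1 * kp lam z) * I *
      M Ψ (i1 (ve x)) (i1 (ve y)) (i1 (ve z)) = 0 := by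
  have h := D.eik3 (i1 (ve x)) (i1 (ve y)) (i1 (ve z))
  have c1 := D.coll x.1 x.2 (i1 (ve y)) (i1 (ve z))
  have c2 := D.coll y.1 y.2 (i1 (ve x)) (i1 (ve z))
  have c3 := D.coll z.1 z.2 (i1 (ve x)) (i1 (ve y))
  rw [show i1 (vv x.1 x.2) = i1 (ve x) from rfl, cc3 D] at c1
  rw [show i1 (vv y.1 y.2) = i1 (ve y) from rfl, cc3 D] at c2
  rw [show i1 (vv z.1 z.2) = i1 (ve z) from rfl, cc3 D] at c3
  rw [c1, c2, c3] at h
  rw [T3_sw23 D.sΦ y z x, T3_sw12 D.sΦ y x z, T3_sw23 D.sΦ x z y,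
    M_sw23 D.sΨ (i1 (ve y)) (i1 (ve z)), M_sw12 D.sΨ (i1 (ve y)) (i1 (ve x)),
    M_sw23 D.sΨ (i1 (ve x)) (i1 (ve z))] at h
  simp only [kp]
  linear_combination h

lemma Dat.eqG (D : Dat lam Φ Ψ) (x y z : Bool × Fin n) :
    (kp lam x + kp lam y) * T3 x y z Φ +
    (sg x.1 * kp lam x + sg y.1 * kp lam y) * I *
      M Ψ (i1 (ve x)) (i1 (ve y)) (iD (ve z)) = 0 := by
  have h := D.eik3 (i1 (ve x)) (i1 (ve y)) (iD (ve z))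
  have c1 := D.coll x.1 x.2 (i1 (ve y)) (iD (ve z))
  have c2 := D.coll y.1 y.2 (i1 (ve x)) (iD (ve z))
  rw [show i1 (vv x.1 x.2) = i1 (ve x) from rfl, cc3D D] at c1
  rw [show i1 (vv y.1 y.2) = i1 (ve y) from rfl, cc3D D] at c2
  rw [c1, c2] at h
  simp only [D.zeroD] at h
  rw [T3_sw23 D.sΦ y z x, T3_sw12 D.sΦ y x z, T3_sw23 D.sΦ x z y,
    M_sw23 D.sΨ (i1 (ve y)) (iD (ve z)), M_sw12 D.sΨ (i1 (ve y)) (i1 (ve x)),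
    M_sw23 D.sΨ (i1 (ve x)) (iD (ve z))] at h
  simp only [kp]
  simp only [zero_mul, mul_zero, add_zero, Finset.sum_const_zero] at h
  linear_combination h

/-- the imaginary part, as a complex function -/
def uu (Ψ : Cn n × Cn n → ℂ) : Cn n → ℂ := fun z => ((Ψ (z, 0)).im : ℂ)

lemma Dat.U (D : Dat lam Φ Ψ) (x y z : Bool × Fin n) :
    2 * I * T3 x y z (uu Ψ) = T3 x y z (fun p => Ψ (p, 0)) + T3 x y z (fun p => Ψ (0, p)) := by
  have h1 := D.sΨ.s1 0
  have h2 := D.sΨ.s2 0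
  have : uu Ψ = fun p => (1 / (2 * I)) * (Ψ (p, 0) + Ψ (0, p)) := by
    funext p
    have := D.skew 0 p
    simp only [uu]
    rw [this]
    apply Complex.ext <;> simp <;> ring
  rw [this]
  simp only [T3]
  rw [dd_cmul _ (h1.add h2), dd_add _ h1 h2, dd_cmul _ ((h1.dd _).add (h2.dd _)),
    dd_add _ (h1.dd _) (h2.dd _), dd_cmul _ (((h1.dd _).dd _).add ((h2.dd _).dd _)),
    dd_add _ ((h1.dd _).dd _) ((h2.dd _).dd _)]
  field_simp

lemma Dat.Usm (D : Dat lam Φ Ψ) : Sm (uu Ψ) :=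
  Complex.ofRealCLM.contDiff.comp (Complex.imCLM.contDiff.comp (D.sΨ.s1 0))

lemma Dat.Uc (D : Dat lam Φ Ψ) (x y z : Bool × Fin n) :
    T3 x y z (uu Ψ) = (starRingEnd ℂ) (T3 (bar x) (bar y) (bar z) (uu Ψ)) := by
  rw [← T3_conj D.Usm]
  congr 1; funext p; simp [uu]

lemma Dat.Pc (D : Dat lam Φ Ψ) (x y z : Bool × Fin n) :
    T3 x y z Φ = (starRingEnd ℂ) (T3 (bar x) (bar y) (bar z) Φ) := by
  rw [← T3_conj D.sΦ]
  congr 1; funext p; exact (D.real p).symm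

lemma Dat.UF (D : Dat lam Φ Ψ) (x y z : Bool × Fin n) :
    2 * I * T3 x y z (uu Ψ) = M Ψ (i1 (ve x)) (i1 (ve y)) (i1 (ve z)) -
      (starRingEnd ℂ) (M Ψ (i1 (ve (bar x))) (i1 (ve (bar y))) (i1 (ve (bar z)))) := by
  rw [D.U, ← T3_s1 D.sΨ, ← T3_s1 D.sΨ, ← T3_conj (D.sΨ.s1 0)]
  have : (fun p => Ψ (0, p)) = fun p => (-1) * (starRingEnd ℂ) (Ψ (p, 0)) := by
    funext p; rw [D.skew 0 p]; ring
  have h := (D.sΨ.s1 0).conj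
  rw [this]
  simp only [T3]
  rw [dd_cmul _ h, dd_cmul _ (h.dd _), dd_cmul _ ((h.dd _).dd _)]
  ring

lemma Dat.UG (D : Dat lam Φ Ψ) (x y z : Bool × Fin n) :
    2 * I * T3 x y z (uu Ψ) = M Ψ (i1 (ve x)) (i1 (ve y)) (iD (ve z)) +
      M Ψ (i1 (ve x)) (i1 (ve z)) (iD (ve y)) + M Ψ (i1 (ve y)) (i1 (ve z)) (iD (ve x)) -
      (sg x.1 + sg y.1 + sg z.1) * I * T3 x y z Φ := by
  have h := D.sΨ
  rw [D.U, T3_s1 h, T3_s2 h]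
  have c0 := M_DDD h D.diag (ve x) (ve y) (ve z)
  have c1 := D.DD1 x y z
  have c2 := D.DD1 x z y
  have c3 := D.DD1 y z x
  rw [M_sw23 h] at c2
  rw [M_sw23 h, M_sw12 h] at c3
  rw [T3_sw23 D.sΦ] at c2
  rw [T3_sw23 D.sΦ, T3_sw12 D.sΦ] at c3
  rw [M_sw23 h (i1 (ve x)) (i1 (ve z)), M_sw23 h (i1 (ve y)) (i1 (ve z)),
    M_sw12 h (i1 (ve y)) (iD (ve x))]
  simp only [iD_eq, M_add1, M_add2 h, M_add3 h] at c0 c1 c2 c3 ⊢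
  linear_combination c0 - c1 - c2 - c3



def sR (x : Bool × Fin n) : ℝ := if x.1 then 1 else -1
def kR (lam : Fin n → ℝ) (x : Bool × Fin n) : ℝ := lam x.2 + sR x * |lam x.2|

lemma sg_R (x : Bool × Fin n) : sg x.1 = ((sR x : ℝ) : ℂ) := by
  unfold sg sR; split_ifs <;> simp
lemma kp_R (x : Bool × Fin n) : kp lam x = ((kR lam x : ℝ) : ℂ) := by
  simp [kp, kap, kR, sg_R x]

lemma Dat.resF (D : Dat lam Φ Ψ) (x y z : Bool × Fin n) (k m k' m' : ℝ)
    (hk : k = kR lam x + kR lam y + kR lam z)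
    (hm : m = sR x * kR lam x + sR y * kR lam y + sR z * kR lam z)
    (hk' : k' = kR lam (bar x) + kR lam (bar y) + kR lam (bar z))
    (hm' : m' = sR (bar x) * kR lam (bar x) + sR (bar y) * kR lam (bar y) + sR (bar z) * kR lam (bar z))
    (h0 : m ≠ 0) (h0' : m' ≠ 0) :
    T3 x y z (uu Ψ) = (((k / m + k' / m') / 2 : ℝ) : ℂ) * T3 x y z Φ := by
  have h1 := D.eqF x y z
  have h2 := congrArg (starRingEnd ℂ) (D.eqF (bar x) (bar y) (bar z))
  have h3 := D.UF x y z
  simp only [sg_R, kp_R] at h1 h2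
  simp only [map_add, map_mul, Complex.conj_ofReal, map_zero, Complex.conj_I] at h2
  rw [← D.Pc] at h2
  norm_cast at h1 h2
  rw [← hk, ← hm] at h1
  rw [← hk', ← hm'] at h2
  have c0 : (m : ℂ) ≠ 0 := by exact_mod_cast h0
  have c0' : (m' : ℂ) ≠ 0 := by exact_mod_cast h0'
  have hI := I_mul_I
  push_cast
  field_simp
  generalize T3 x y z (uu Ψ) = U at *
  generalize T3 x y z Φ = P at *
  generalize (starRingEnd ℂ) (M Ψ (i1 (ve (bar x))) (i1 (ve (bar y))) (i1 (ve (bar z)))) = F' at *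
  generalize M Ψ (i1 (ve x)) (i1 (ve y)) (i1 (ve z)) = F at *
  linear_combination -I * m * m' * h3 - m' * h1 - m * h2 + 2 * U * m * m' * hI

lemma Dat.resG (D : Dat lam Φ Ψ) (x y z : Bool × Fin n) (k1 m1 k2 m2 k3 m3 : ℝ)
    (hk1 : k1 = kR lam x + kR lam y) (hm1 : m1 = sR x * kR lam x + sR y * kR lam y)
    (hk2 : k2 = kR lam x + kR lam z) (hm2 : m2 = sR x * kR lam x + sR z * kR lam z)
    (hk3 : k3 = kR lam y + kR lam z) (hm3 : m3 = sR y * kR lam y + sR z * kR lam z)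
    (h1 : m1 ≠ 0) (h2 : m2 ≠ 0) (h3 : m3 ≠ 0) :
    T3 x y z (uu Ψ) = (((k1 / m1 + k2 / m2 + k3 / m3 - (sR x + sR y + sR z)) / 2 : ℝ) : ℂ) *
      T3 x y z Φ := by
  have e1 := D.eqG x y z
  have e2 := D.eqG x z y
  have e3 := D.eqG y z x
  have e := D.UG x y z
  rw [T3_sw23 D.sΦ] at e2
  rw [T3_sw23 D.sΦ, T3_sw12 D.sΦ] at e3
  simp only [sg_R, kp_R] at e1 e2 e3 e
  norm_cast at e1 e2 e3 e
  rw [← hk1, ← hm1] at e1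
  rw [← hk2, ← hm2] at e2
  rw [← hk3, ← hm3] at e3
  have c1 : (m1 : ℂ) ≠ 0 := by exact_mod_cast h1
  have c2 : (m2 : ℂ) ≠ 0 := by exact_mod_cast h2
  have c3 : (m3 : ℂ) ≠ 0 := by exact_mod_cast h3
  have hI := I_mul_I
  generalize sR x + sR y + sR z = S at *
  push_cast at e ⊢
  field_simp
  generalize T3 x y z (uu Ψ) = U at *
  generalize T3 x y z Φ = P at *
  generalize M Ψ (i1 (ve x)) (i1 (ve y)) (iD (ve z)) = G1 at *
  generalize M Ψ (i1 (ve x)) (i1 (ve z)) (iD (ve y)) = G2 at *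
  generalize M Ψ (i1 (ve y)) (i1 (ve z)) (iD (ve x)) = G3 at *
  linear_combination -I * m1 * m2 * m3 * e - m2 * m3 * e1 - m1 * m3 * e2 - m1 * m2 * e3
    + (2 * U + S * P) * m1 * m2 * m3 * hI

lemma Dat.resB (D : Dat lam Φ Ψ) (x y z : Bool × Fin n) (c : ℝ)
    (h : T3 (bar x) (bar y) (bar z) (uu Ψ) = (c : ℂ) * T3 (bar x) (bar y) (bar z) Φ) :
    T3 x y z (uu Ψ) = (c : ℂ) * T3 x y z Φ := by
  rw [D.Uc, h, D.Pc x y z, map_mul, Complex.conj_ofReal]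

lemma kR_tp {s : Fin n} (h : 0 < lam s) : kR lam (true, s) = 2 * |lam s| := by
  simp [kR, sR, abs_of_pos h]; ring
lemma kR_fp {s : Fin n} (h : 0 < lam s) : kR lam (false, s) = 0 := by
  simp [kR, sR, abs_of_pos h]
lemma kR_tn {s : Fin n} (h : lam s < 0) : kR lam (true, s) = 0 := by
  simp [kR, sR, abs_of_neg h]
lemma kR_fn {s : Fin n} (h : lam s < 0) : kR lam (false, s) = -2 * |lam s| := by
  simp [kR, sR, abs_of_neg h]; ring
lemma sR_t (s : Fin n) : sR (true, s) = 1 := rfl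
lemma sR_f (s : Fin n) : sR (false, s) = -1 := by simp [sR]
lemma bar_t (s : Fin n) : bar (true, s) = (false, s) := rfl
lemma bar_f (s : Fin n) : bar (false, s) = (true, s) := rfl

lemma T3_bhh (s j t : Fin n) (f : Cn n → ℂ) :
    wdb s (wd j (wd t f)) 0 = T3 (true, s) (false, j) (false, t) f := by
  simp only [wd_eq, wdb_eq]; rfl
lemma T3_hhh (s j t : Fin n) (f : Cn n → ℂ) :
    wd s (wd j (wd t f)) 0 = T3 (false, s) (false, j) (false, t) f := by
  simp only [wd_eq]; rfl

end main

set_option maxHeartbeats 1000000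
set_option linter.unusedSimpArgs false
/-- the third Wirtinger derivatives of `u(z) := Im ψ(z,0)` at `0`. -/
theorem statement11 (n q : ℕ) (hn : 1 ≤ n) (hq : q ≤ n) (lam : Fin n → ℝ)
    (hneg : ∀ j : Fin n, (j : ℕ) < q → lam j < 0)
    (hpos : ∀ j : Fin n, q ≤ (j : ℕ) → 0 < lam j)
    (φ : Cn n → ℝ) (hφ : PhiOK lam φ)
    (ψ : Cn n → Cn n → ℂ) (hψ : Admissible lam φ ψ) :
    -- u := Im ψ(·,0), regarded as a complex-valued function for Wirtinger calculus
    let u : Cn n → ℂ := fun z => ((ψ z 0).im : ℂ)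
    (∀ j t s : Fin n, q ≤ (j : ℕ) → q ≤ (t : ℕ) → q ≤ (s : ℕ) →
      wdb s (wd j (wd t u)) 0 = wdb s (wd j (wd t (cplx φ))) 0) ∧
    (∀ j t s : Fin n, q ≤ (j : ℕ) → (t : ℕ) < q → q ≤ (s : ℕ) →
      wdb s (wd j (wd t u)) 0 =
        ((|lam s| / (|lam s| + |lam t|) : ℝ) : ℂ) * wdb s (wd j (wd t (cplx φ))) 0) ∧
    (∀ j t s : Fin n, (j : ℕ) < q → (t : ℕ) < q → q ≤ (s : ℕ) →
      wdb s (wd j (wd t u)) 0 =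
        ((1 / (|lam j| + |lam t| + |lam s|) *
            (|lam s| - |lam j| * |lam t| / (|lam j| + |lam s|)
                     - |lam j| * |lam t| / (|lam s| + |lam t|)) : ℝ) : ℂ) *
          wdb s (wd j (wd t (cplx φ))) 0) ∧
    (∀ j t s : Fin n, (j : ℕ) < q → (t : ℕ) < q → (s : ℕ) < q →
      wdb s (wd j (wd t u)) 0 = - wdb s (wd j (wd t (cplx φ))) 0) ∧
    (∀ j t s : Fin n, q ≤ (j : ℕ) → (t : ℕ) < q → (s : ℕ) < q →
      wdb s (wd j (wd t u)) 0 =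
        - ((|lam s| / (|lam j| + |lam s|) : ℝ) : ℂ) * wdb s (wd j (wd t (cplx φ))) 0) ∧
    (∀ j t s : Fin n, q ≤ (j : ℕ) → q ≤ (t : ℕ) → (s : ℕ) < q →
      wdb s (wd j (wd t u)) 0 =
        ((1 / (|lam j| + |lam t| + |lam s|) *
            (- |lam s| + |lam t| * |lam j| / (|lam j| + |lam s|)
                       + |lam t| * |lam j| / (|lam s| + |lam t|)) : ℝ) : ℂ) *
          wdb s (wd j (wd t (cplx φ))) 0) ∧
    (∀ s j t : Fin n, wd s (wd j (wd t u)) 0 = 0) := by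
  intro u
  have D := mkDat lam φ hφ ψ hψ
  have hu : u = uu (fun p : Cn n × Cn n => ψ p.1 p.2) := rfl
  simp only [T3_bhh, T3_hhh, hu]
  have ap : ∀ {j : Fin n}, 0 < lam j → 0 < |lam j| := fun h => abs_pos.2 h.ne'
  have an : ∀ {j : Fin n}, lam j < 0 → 0 < |lam j| := fun h => abs_pos.2 h.ne
  refine ⟨?_, ?_, ?_, ?_, ?_, ?_, ?_⟩
  · intro j t s hj ht hs
    replace hj := hpos j hj
    replace ht := hpos t ht
    replace hs := hpos s hs
    have aj' := ap hj; have at' := ap ht; have as' := ap hs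
    have key := D.resF (true, s) (false, j) (false, t) (2 * |lam s|) (2 * |lam s|) (2 * |lam j| + 2 * |lam t|) (2 * |lam j| + 2 * |lam t|)
        (by simp only [bar_t, bar_f, sR_t, sR_f, kR_tp hj, kR_fp hj, kR_tp ht, kR_fp ht, kR_tp hs, kR_fp hs]; try ring)
        (by simp only [bar_t, bar_f, sR_t, sR_f, kR_tp hj, kR_fp hj, kR_tp ht, kR_fp ht, kR_tp hs, kR_fp hs]; try ring)
        (by simp only [bar_t, bar_f, sR_t, sR_f, kR_tp hj, kR_fp hj, kR_tp ht, kR_fp ht, kR_tp hs, kR_fp hs]; try ring)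
        (by simp only [bar_t, bar_f, sR_t, sR_f, kR_tp hj, kR_fp hj, kR_tp ht, kR_fp ht, kR_tp hs, kR_fp hs]; try ring)
        (by positivity) (by positivity)
    rw [key]
    conv_rhs => rw [← one_mul (T3 _ _ _ _)]
    congr 1
    refine congrArg _ (?_ : _ = (1 : ℝ)) |>.trans (by push_cast; ring)
    try simp only [sR_t, sR_f, bar_t, bar_f]
    generalize |lam j| = a at *; generalize |lam t| = b at *; generalize |lam s| = c at *
    field_simp
    try ring
  · intro j t s hj ht hs
    replace hj := hpos j hj
    replace ht := hneg t ht
    replace hs := hpos s hs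
    have aj' := ap hj; have at' := an ht; have as' := ap hs
    have key := D.resF (true, s) (false, j) (false, t) (2 * |lam s| + -2 * |lam t|) (2 * |lam s| + 2 * |lam t|) (2 * |lam j|) (2 * |lam j|)
        (by simp only [bar_t, bar_f, sR_t, sR_f, kR_tp hj, kR_fp hj, kR_tn ht, kR_fn ht, kR_tp hs, kR_fp hs]; try ring)
        (by simp only [bar_t, bar_f, sR_t, sR_f, kR_tp hj, kR_fp hj, kR_tn ht, kR_fn ht, kR_tp hs, kR_fp hs]; try ring)
        (by simp only [bar_t, bar_f, sR_t, sR_f, kR_tp hj, kR_fp hj, kR_tn ht, kR_fn ht, kR_tp hs, kR_fp hs]; try ring)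
        (by simp only [bar_t, bar_f, sR_t, sR_f, kR_tp hj, kR_fp hj, kR_tn ht, kR_fn ht, kR_tp hs, kR_fp hs]; try ring)
        (by positivity) (by positivity)
    rw [key]
    congr 1
    refine congrArg _ (?_ : _ = (|lam s| / (|lam s| + |lam t|) : ℝ)) |>.trans (by push_cast; ring)
    try simp only [sR_t, sR_f, bar_t, bar_f]
    generalize |lam j| = a at *; generalize |lam t| = b at *; generalize |lam s| = c at *
    field_simp
    try ring
  · intro j t s hj ht hs
    replace hj := hneg j hj
    replace ht := hneg t ht
    replace hs := hpos s hs
    have aj' := an hj; have at' := an ht; have as' := ap hs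
    have key := D.resG (true, s) (false, j) (false, t) (2 * |lam s| + -2 * |lam j|) (2 * |lam s| + 2 * |lam j|) (2 * |lam s| + -2 * |lam t|) (2 * |lam s| + 2 * |lam t|) (-2 * |lam j| + -2 * |lam t|) (2 * |lam j| + 2 * |lam t|)
        (by simp only [bar_t, bar_f, sR_t, sR_f, kR_tn hj, kR_fn hj, kR_tn ht, kR_fn ht, kR_tp hs, kR_fp hs]; try ring)
        (by simp only [bar_t, bar_f, sR_t, sR_f, kR_tn hj, kR_fn hj, kR_tn ht, kR_fn ht, kR_tp hs, kR_fp hs]; try ring)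
        (by simp only [bar_t, bar_f, sR_t, sR_f, kR_tn hj, kR_fn hj, kR_tn ht, kR_fn ht, kR_tp hs, kR_fp hs]; try ring)
        (by simp only [bar_t, bar_f, sR_t, sR_f, kR_tn hj, kR_fn hj, kR_tn ht, kR_fn ht, kR_tp hs, kR_fp hs]; try ring)
        (by simp only [bar_t, bar_f, sR_t, sR_f, kR_tn hj, kR_fn hj, kR_tn ht, kR_fn ht, kR_tp hs, kR_fp hs]; try ring)
        (by simp only [bar_t, bar_f, sR_t, sR_f, kR_tn hj, kR_fn hj, kR_tn ht, kR_fn ht, kR_tp hs, kR_fp hs]; try ring)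
        (by positivity) (by positivity) (by positivity)
    rw [key]
    congr 1
    refine congrArg _ (?_ : _ = (1 / (|lam j| + |lam t| + |lam s|) * (|lam s| - |lam j| * |lam t| / (|lam j| + |lam s|) - |lam j| * |lam t| / (|lam s| + |lam t|)) : ℝ)) |>.trans (by push_cast; ring)
    try simp only [sR_t, sR_f, bar_t, bar_f]
    generalize |lam j| = a at *; generalize |lam t| = b at *; generalize |lam s| = c at *
    field_simp
    try ring
  · intro j t s hj ht hs
    replace hj := hneg j hj
    replace ht := hneg t ht
    replace hs := hneg s hs
    have aj' := an hj; have at' := an ht; have as' := an hs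
    have key := D.resF (true, s) (false, j) (false, t) (-2 * |lam j| + -2 * |lam t|) (2 * |lam j| + 2 * |lam t|) (-2 * |lam s|) (2 * |lam s|)
        (by simp only [bar_t, bar_f, sR_t, sR_f, kR_tn hj, kR_fn hj, kR_tn ht, kR_fn ht, kR_tn hs, kR_fn hs]; try ring)
        (by simp only [bar_t, bar_f, sR_t, sR_f, kR_tn hj, kR_fn hj, kR_tn ht, kR_fn ht, kR_tn hs, kR_fn hs]; try ring)
        (by simp only [bar_t, bar_f, sR_t, sR_f, kR_tn hj, kR_fn hj, kR_tn ht, kR_fn ht, kR_tn hs, kR_fn hs]; try ring)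
        (by simp only [bar_t, bar_f, sR_t, sR_f, kR_tn hj, kR_fn hj, kR_tn ht, kR_fn ht, kR_tn hs, kR_fn hs]; try ring)
        (by positivity) (by positivity)
    rw [key]
    rw [neg_eq_neg_one_mul (T3 _ _ _ _)]
    congr 1
    refine congrArg _ (?_ : _ = (-1 : ℝ)) |>.trans (by push_cast; ring)
    try simp only [sR_t, sR_f, bar_t, bar_f]
    generalize |lam j| = a at *; generalize |lam t| = b at *; generalize |lam s| = c at *
    field_simp
    try ring
  · intro j t s hj ht hs
    replace hj := hpos j hj
    replace ht := hneg t ht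
    replace hs := hneg s hs
    have aj' := ap hj; have at' := an ht; have as' := an hs
    have key := D.resF (true, s) (false, j) (false, t) (-2 * |lam t|) (2 * |lam t|) (-2 * |lam s| + 2 * |lam j|) (2 * |lam s| + 2 * |lam j|)
        (by simp only [bar_t, bar_f, sR_t, sR_f, kR_tp hj, kR_fp hj, kR_tn ht, kR_fn ht, kR_tn hs, kR_fn hs]; try ring)
        (by simp only [bar_t, bar_f, sR_t, sR_f, kR_tp hj, kR_fp hj, kR_tn ht, kR_fn ht, kR_tn hs, kR_fn hs]; try ring)
        (by simp only [bar_t, bar_f, sR_t, sR_f, kR_tp hj, kR_fp hj, kR_tn ht, kR_fn ht, kR_tn hs, kR_fn hs]; try ring)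
        (by simp only [bar_t, bar_f, sR_t, sR_f, kR_tp hj, kR_fp hj, kR_tn ht, kR_fn ht, kR_tn hs, kR_fn hs]; try ring)
        (by positivity) (by positivity)
    rw [key]
    congr 1
    refine congrArg _ (?_ : _ = (-(|lam s| / (|lam j| + |lam s|)) : ℝ)) |>.trans (by push_cast; ring)
    try simp only [sR_t, sR_f, bar_t, bar_f]
    generalize |lam j| = a at *; generalize |lam t| = b at *; generalize |lam s| = c at *
    field_simp
    try ring
  · intro j t s hj ht hs
    replace hj := hpos j hj
    replace ht := hpos t ht
    replace hs := hneg s hs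
    have aj' := ap hj; have at' := ap ht; have as' := an hs
    have key := D.resB (true, s) (false, j) (false, t) _ (D.resG (false, s) (true, j) (true, t) (-2 * |lam s| + 2 * |lam j|) (2 * |lam s| + 2 * |lam j|) (-2 * |lam s| + 2 * |lam t|) (2 * |lam s| + 2 * |lam t|) (2 * |lam j| + 2 * |lam t|) (2 * |lam j| + 2 * |lam t|)
        (by simp only [bar_t, bar_f, sR_t, sR_f, kR_tp hj, kR_fp hj, kR_tp ht, kR_fp ht, kR_tn hs, kR_fn hs]; try ring)
        (by simp only [bar_t, bar_f, sR_t, sR_f, kR_tp hj, kR_fp hj, kR_tp ht, kR_fp ht, kR_tn hs, kR_fn hs]; try ring)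
        (by simp only [bar_t, bar_f, sR_t, sR_f, kR_tp hj, kR_fp hj, kR_tp ht, kR_fp ht, kR_tn hs, kR_fn hs]; try ring)
        (by simp only [bar_t, bar_f, sR_t, sR_f, kR_tp hj, kR_fp hj, kR_tp ht, kR_fp ht, kR_tn hs, kR_fn hs]; try ring)
        (by simp only [bar_t, bar_f, sR_t, sR_f, kR_tp hj, kR_fp hj, kR_tp ht, kR_fp ht, kR_tn hs, kR_fn hs]; try ring)
        (by simp only [bar_t, bar_f, sR_t, sR_f, kR_tp hj, kR_fp hj, kR_tp ht, kR_fp ht, kR_tn hs, kR_fn hs]; try ring)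
        (by positivity) (by positivity) (by positivity))
    rw [key]
    congr 1
    refine congrArg _ (?_ : _ = (1 / (|lam j| + |lam t| + |lam s|) * (- |lam s| + |lam t| * |lam j| / (|lam j| + |lam s|) + |lam t| * |lam j| / (|lam s| + |lam t|)) : ℝ)) |>.trans (by push_cast; ring)
    try simp only [sR_t, sR_f, bar_t, bar_f]
    generalize |lam j| = a at *; generalize |lam t| = b at *; generalize |lam s| = c at *
    field_simp
    try ring
  · intro s j t
    have sp : ∀ i : Fin n, lam i < 0 ∨ 0 < lam i := fun i => (lt_or_ge (i : ℕ) q).imp (hneg i) (hpos i)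
    rcases sp s with hs | hs <;> rcases sp j with hj | hj <;> rcases sp t with ht | ht
    · have aj' := an hj; have at' := an ht; have as' := an hs
      have key := D.resG (false, s) (false, j) (false, t) (-2 * |lam s| + -2 * |lam j|) (2 * |lam s| + 2 * |lam j|) (-2 * |lam s| + -2 * |lam t|) (2 * |lam s| + 2 * |lam t|) (-2 * |lam j| + -2 * |lam t|) (2 * |lam j| + 2 * |lam t|)
        (by simp only [bar_t, bar_f, sR_t, sR_f, kR_tn hj, kR_fn hj, kR_tn ht, kR_fn ht, kR_tn hs, kR_fn hs]; try ring)
        (by simp only [bar_t, bar_f, sR_t, sR_f, kR_tn hj, kR_fn hj, kR_tn ht, kR_fn ht, kR_tn hs, kR_fn hs]; try ring)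
        (by simp only [bar_t, bar_f, sR_t, sR_f, kR_tn hj, kR_fn hj, kR_tn ht, kR_fn ht, kR_tn hs, kR_fn hs]; try ring)
        (by simp only [bar_t, bar_f, sR_t, sR_f, kR_tn hj, kR_fn hj, kR_tn ht, kR_fn ht, kR_tn hs, kR_fn hs]; try ring)
        (by simp only [bar_t, bar_f, sR_t, sR_f, kR_tn hj, kR_fn hj, kR_tn ht, kR_fn ht, kR_tn hs, kR_fn hs]; try ring)
        (by simp only [bar_t, bar_f, sR_t, sR_f, kR_tn hj, kR_fn hj, kR_tn ht, kR_fn ht, kR_tn hs, kR_fn hs]; try ring)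
        (by positivity) (by positivity) (by positivity)
      rw [key]
      refine mul_eq_zero_of_left (Complex.ofReal_eq_zero.2 ?_) _
      try simp only [sR_t, sR_f, bar_t, bar_f]
      generalize |lam j| = a at *; generalize |lam t| = b at *; generalize |lam s| = c at *
      field_simp
      try ring
    · have aj' := an hj; have at' := ap ht; have as' := an hs
      have key := D.resF (false, s) (false, j) (false, t) (-2 * |lam s| + -2 * |lam j|) (2 * |lam s| + 2 * |lam j|) (2 * |lam t|) (2 * |lam t|)
        (by simp only [bar_t, bar_f, sR_t, sR_f, kR_tn hj, kR_fn hj, kR_tp ht, kR_fp ht, kR_tn hs, kR_fn hs]; try ring)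
        (by simp only [bar_t, bar_f, sR_t, sR_f, kR_tn hj, kR_fn hj, kR_tp ht, kR_fp ht, kR_tn hs, kR_fn hs]; try ring)
        (by simp only [bar_t, bar_f, sR_t, sR_f, kR_tn hj, kR_fn hj, kR_tp ht, kR_fp ht, kR_tn hs, kR_fn hs]; try ring)
        (by simp only [bar_t, bar_f, sR_t, sR_f, kR_tn hj, kR_fn hj, kR_tp ht, kR_fp ht, kR_tn hs, kR_fn hs]; try ring)
        (by positivity) (by positivity)
      rw [key]
      refine mul_eq_zero_of_left (Complex.ofReal_eq_zero.2 ?_) _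
      try simp only [sR_t, sR_f, bar_t, bar_f]
      generalize |lam j| = a at *; generalize |lam t| = b at *; generalize |lam s| = c at *
      field_simp
      try ring
    · have aj' := ap hj; have at' := an ht; have as' := an hs
      have key := D.resF (false, s) (false, j) (false, t) (-2 * |lam s| + -2 * |lam t|) (2 * |lam s| + 2 * |lam t|) (2 * |lam j|) (2 * |lam j|)
        (by simp only [bar_t, bar_f, sR_t, sR_f, kR_tp hj, kR_fp hj, kR_tn ht, kR_fn ht, kR_tn hs, kR_fn hs]; try ring)
        (by simp only [bar_t, bar_f, sR_t, sR_f, kR_tp hj, kR_fp hj, kR_tn ht, kR_fn ht, kR_tn hs, kR_fn hs]; try ring)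
        (by simp only [bar_t, bar_f, sR_t, sR_f, kR_tp hj, kR_fp hj, kR_tn ht, kR_fn ht, kR_tn hs, kR_fn hs]; try ring)
        (by simp only [bar_t, bar_f, sR_t, sR_f, kR_tp hj, kR_fp hj, kR_tn ht, kR_fn ht, kR_tn hs, kR_fn hs]; try ring)
        (by positivity) (by positivity)
      rw [key]
      refine mul_eq_zero_of_left (Complex.ofReal_eq_zero.2 ?_) _
      try simp only [sR_t, sR_f, bar_t, bar_f]
      generalize |lam j| = a at *; generalize |lam t| = b at *; generalize |lam s| = c at *
      field_simp
      try ring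
    · have aj' := ap hj; have at' := ap ht; have as' := an hs
      have key := D.resF (false, s) (false, j) (false, t) (-2 * |lam s|) (2 * |lam s|) (2 * |lam j| + 2 * |lam t|) (2 * |lam j| + 2 * |lam t|)
        (by simp only [bar_t, bar_f, sR_t, sR_f, kR_tp hj, kR_fp hj, kR_tp ht, kR_fp ht, kR_tn hs, kR_fn hs]; try ring)
        (by simp only [bar_t, bar_f, sR_t, sR_f, kR_tp hj, kR_fp hj, kR_tp ht, kR_fp ht, kR_tn hs, kR_fn hs]; try ring)
        (by simp only [bar_t, bar_f, sR_t, sR_f, kR_tp hj, kR_fp hj, kR_tp ht, kR_fp ht, kR_tn hs, kR_fn hs]; try ring)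
        (by simp only [bar_t, bar_f, sR_t, sR_f, kR_tp hj, kR_fp hj, kR_tp ht, kR_fp ht, kR_tn hs, kR_fn hs]; try ring)
        (by positivity) (by positivity)
      rw [key]
      refine mul_eq_zero_of_left (Complex.ofReal_eq_zero.2 ?_) _
      try simp only [sR_t, sR_f, bar_t, bar_f]
      generalize |lam j| = a at *; generalize |lam t| = b at *; generalize |lam s| = c at *
      field_simp
      try ring
    · have aj' := an hj; have at' := an ht; have as' := ap hs
      have key := D.resF (false, s) (false, j) (false, t) (-2 * |lam j| + -2 * |lam t|) (2 * |lam j| + 2 * |lam t|) (2 * |lam s|) (2 * |lam s|)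
        (by simp only [bar_t, bar_f, sR_t, sR_f, kR_tn hj, kR_fn hj, kR_tn ht, kR_fn ht, kR_tp hs, kR_fp hs]; try ring)
        (by simp only [bar_t, bar_f, sR_t, sR_f, kR_tn hj, kR_fn hj, kR_tn ht, kR_fn ht, kR_tp hs, kR_fp hs]; try ring)
        (by simp only [bar_t, bar_f, sR_t, sR_f, kR_tn hj, kR_fn hj, kR_tn ht, kR_fn ht, kR_tp hs, kR_fp hs]; try ring)
        (by simp only [bar_t, bar_f, sR_t, sR_f, kR_tn hj, kR_fn hj, kR_tn ht, kR_fn ht, kR_tp hs, kR_fp hs]; try ring)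
        (by positivity) (by positivity)
      rw [key]
      refine mul_eq_zero_of_left (Complex.ofReal_eq_zero.2 ?_) _
      try simp only [sR_t, sR_f, bar_t, bar_f]
      generalize |lam j| = a at *; generalize |lam t| = b at *; generalize |lam s| = c at *
      field_simp
      try ring
    · have aj' := an hj; have at' := ap ht; have as' := ap hs
      have key := D.resF (false, s) (false, j) (false, t) (-2 * |lam j|) (2 * |lam j|) (2 * |lam s| + 2 * |lam t|) (2 * |lam s| + 2 * |lam t|)
        (by simp only [bar_t, bar_f, sR_t, sR_f, kR_tn hj, kR_fn hj, kR_tp ht, kR_fp ht, kR_tp hs, kR_fp hs]; try ring)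
        (by simp only [bar_t, bar_f, sR_t, sR_f, kR_tn hj, kR_fn hj, kR_tp ht, kR_fp ht, kR_tp hs, kR_fp hs]; try ring)
        (by simp only [bar_t, bar_f, sR_t, sR_f, kR_tn hj, kR_fn hj, kR_tp ht, kR_fp ht, kR_tp hs, kR_fp hs]; try ring)
        (by simp only [bar_t, bar_f, sR_t, sR_f, kR_tn hj, kR_fn hj, kR_tp ht, kR_fp ht, kR_tp hs, kR_fp hs]; try ring)
        (by positivity) (by positivity)
      rw [key]
      refine mul_eq_zero_of_left (Complex.ofReal_eq_zero.2 ?_) _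
      try simp only [sR_t, sR_f, bar_t, bar_f]
      generalize |lam j| = a at *; generalize |lam t| = b at *; generalize |lam s| = c at *
      field_simp
      try ring
    · have aj' := ap hj; have at' := an ht; have as' := ap hs
      have key := D.resF (false, s) (false, j) (false, t) (-2 * |lam t|) (2 * |lam t|) (2 * |lam s| + 2 * |lam j|) (2 * |lam s| + 2 * |lam j|)
        (by simp only [bar_t, bar_f, sR_t, sR_f, kR_tp hj, kR_fp hj, kR_tn ht, kR_fn ht, kR_tp hs, kR_fp hs]; try ring)
        (by simp only [bar_t, bar_f, sR_t, sR_f, kR_tp hj, kR_fp hj, kR_tn ht, kR_fn ht, kR_tp hs, kR_fp hs]; try ring)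
        (by simp only [bar_t, bar_f, sR_t, sR_f, kR_tp hj, kR_fp hj, kR_tn ht, kR_fn ht, kR_tp hs, kR_fp hs]; try ring)
        (by simp only [bar_t, bar_f, sR_t, sR_f, kR_tp hj, kR_fp hj, kR_tn ht, kR_fn ht, kR_tp hs, kR_fp hs]; try ring)
        (by positivity) (by positivity)
      rw [key]
      refine mul_eq_zero_of_left (Complex.ofReal_eq_zero.2 ?_) _
      try simp only [sR_t, sR_f, bar_t, bar_f]
      generalize |lam j| = a at *; generalize |lam t| = b at *; generalize |lam s| = c at *
      field_simp
      try ring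
    · have aj' := ap hj; have at' := ap ht; have as' := ap hs
      have key := D.resB (false, s) (false, j) (false, t) _ (D.resG (true, s) (true, j) (true, t) (2 * |lam s| + 2 * |lam j|) (2 * |lam s| + 2 * |lam j|) (2 * |lam s| + 2 * |lam t|) (2 * |lam s| + 2 * |lam t|) (2 * |lam j| + 2 * |lam t|) (2 * |lam j| + 2 * |lam t|)
        (by simp only [bar_t, bar_f, sR_t, sR_f, kR_tp hj, kR_fp hj, kR_tp ht, kR_fp ht, kR_tp hs, kR_fp hs]; try ring)
        (by simp only [bar_t, bar_f, sR_t, sR_f, kR_tp hj, kR_fp hj, kR_tp ht, kR_fp ht, kR_tp hs, kR_fp hs]; try ring)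
        (by simp only [bar_t, bar_f, sR_t, sR_f, kR_tp hj, kR_fp hj, kR_tp ht, kR_fp ht, kR_tp hs, kR_fp hs]; try ring)
        (by simp only [bar_t, bar_f, sR_t, sR_f, kR_tp hj, kR_fp hj, kR_tp ht, kR_fp ht, kR_tp hs, kR_fp hs]; try ring)
        (by simp only [bar_t, bar_f, sR_t, sR_f, kR_tp hj, kR_fp hj, kR_tp ht, kR_fp ht, kR_tp hs, kR_fp hs]; try ring)
        (by simp only [bar_t, bar_f, sR_t, sR_f, kR_tp hj, kR_fp hj, kR_tp ht, kR_fp ht, kR_tp hs, kR_fp hs]; try ring)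
        (by positivity) (by positivity) (by positivity))
      rw [key]
      refine mul_eq_zero_of_left (Complex.ofReal_eq_zero.2 ?_) _
      try simp only [sR_t, sR_f, bar_t, bar_f]
      generalize |lam j| = a at *; generalize |lam t| = b at *; generalize |lam s| = c at *
      field_simp
      try ring
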